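/- arXiv:1802.10286 — 2 statements merged into one kernel-verified Lean document; each statement's English description precedes it below -/
import Mathlib

section
/- For every ε ≥ ε*, every integer k ≥ 2, every τ ≥ 0 and every real ω, D_k(iω; τ, ε) ≠ 0; that is, no characteristic function of a mode k ≥ 2 ever has a purely imaginary (or zero) root when ε ≥ ε*. (This follows since for k ≥ 2 and ε ≥ ε* one has r_k + q_k > 0, r_k − q_k > 0, and p_k² − s_k² − 2r_k > 0.) -/
/-- `p_k` coefficient of the `k`-th mode characteristic function. -/
noncomputable def pk (ε : ℝ) (k : ℕ) : ℝ := 4 * (ε + 1) * (k : ℝ) ^ 2 * Real.pi ^ 2 + 1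

/-- `r_k` coefficient of the `k`-th mode characteristic function. -/
noncomputable def rk (ε : ℝ) (k : ℕ) : ℝ :=
  16 * ε * (k : ℝ) ^ 4 * Real.pi ^ 4 + 4 * (k : ℝ) ^ 2 * Real.pi ^ 2

/-- `s_k` coefficient of the `k`-th mode characteristic function. -/
noncomputable def sk : ℝ := 23 / 3

/-- `q_k` coefficient of the `k`-th mode characteristic function. -/
noncomputable def qk (ε : ℝ) (k : ℕ) : ℝ :=
  4 * (9 * ε - 4 / 3) * (k : ℝ) ^ 2 * Real.pi ^ 2 + 9

/-- The `k`-th mode characteristic function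
`D_k(λ; τ, ε) = λ² + p_k λ + r_k + (s_k λ + q_k) e^{-λτ}`. -/
noncomputable def Dk (ε τ : ℝ) (k : ℕ) (z : ℂ) : ℂ :=
  z ^ 2 + (pk ε k : ℂ) * z + (rk ε k : ℂ) +
    ((sk : ℂ) * z + (qk ε k : ℂ)) * Complex.exp (-z * (τ : ℂ))

/-- The critical diffusion ratio `ε* = (4π²/3 - 9)/(16π⁴ + 36π²)`. -/
noncomputable def epsStar : ℝ := (4 * Real.pi ^ 2 / 3 - 9) / (16 * Real.pi ^ 4 + 36 * Real.pi ^ 2)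

/-- The zeroth-mode characteristic function `D_0(λ; τ) = λ² + λ + ((23/3)λ + 9)e^{-λτ}`. -/
noncomputable def D0 (τ : ℝ) (z : ℂ) : ℂ :=
  z ^ 2 + z + ((23 / 3 : ℂ) * z + 9) * Complex.exp (-z * (τ : ℂ))

/-- The critical Hopf frequency `ω* = √((520 + √296644)/18)`. -/
noncomputable def omegaStar : ℝ := Real.sqrt ((520 + Real.sqrt 296644) / 18)

/-!
If `iω` is a root of `λ² + pλ + r + (sλ + q)e^{-λτ}`, then `|e^{-iωτ}| = 1` forces
`|r - ω² + ipω| = |q + isω|`. The difference of the two squared moduli is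
`ω⁴ + (p² - s² - 2r)ω² + (r² - q²)`, which is positive as soon as `s² + 2r ≤ p²` and `q² < r²`.

For a mode `k ≥ 1` with diffusion rate `x = 4k²π²`, the one condition that restricts `ε` is
`r_k + q_k = ε(x² + 9x) - (x/3 - 9) > 0`, that is, `ε` exceeds
`(x/3 - 9)/(x² + 9x)`. At `k = 1` this bound is `ε*`, and every higher mode has a smaller one.
-/

section Quasipolynomial

open Complex

theorem normSq_quadratic_I_mul (p r ω : ℝ) :
    normSq ((I * ω) ^ 2 + p * (I * ω) + r) = (r - ω ^ 2) ^ 2 + (p * ω) ^ 2 := by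
  have cartesian : (I * ω) ^ 2 + p * (I * ω) + r = (r - ω ^ 2 : ℝ) + (p * ω : ℝ) * I := by
    push_cast
    linear_combination (ω : ℂ) ^ 2 * I_sq
  rw [cartesian, normSq_add_mul_I]

theorem normSq_linear_I_mul (s q ω : ℝ) :
    normSq (s * (I * ω) + q) = q ^ 2 + (s * ω) ^ 2 := by
  have cartesian : s * (I * ω) + q = (q : ℂ) + (s * ω : ℝ) * I := by
    push_cast
    ring
  rw [cartesian, normSq_add_mul_I]

theorem normSq_exp_neg_I_mul_mul (ω τ : ℝ) : normSq (exp (-(I * ω) * τ)) = 1 := by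
  have phase : -(I * ω) * τ = I * (-(ω * τ) : ℝ) := by
    push_cast
    ring
  rw [phase, normSq_eq_norm_sq, norm_exp_I_mul_ofReal, one_pow]

theorem delayed_quadratic_I_mul_ne_zero {p r s q : ℝ} (hqr : q ^ 2 < r ^ 2)
    (hsp : s ^ 2 + 2 * r ≤ p ^ 2) (τ ω : ℝ) :
    (I * ω) ^ 2 + p * (I * ω) + r + (s * (I * ω) + q) * exp (-(I * ω) * τ) ≠ 0 := by
  intro root
  have moduli_eq : (r - ω ^ 2) ^ 2 + (p * ω) ^ 2 = q ^ 2 + (s * ω) ^ 2 := by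
    simpa only [normSq_neg, normSq_mul, normSq_exp_neg_I_mul_mul, mul_one,
      normSq_quadratic_I_mul, normSq_linear_I_mul]
      using congrArg normSq (eq_neg_of_add_eq_zero_left root)
  have moduli_lt : q ^ 2 + (s * ω) ^ 2 < (r - ω ^ 2) ^ 2 + (p * ω) ^ 2 := by
    have middle_nonneg : 0 ≤ (p ^ 2 - (s ^ 2 + 2 * r)) * ω ^ 2 :=
      mul_nonneg (sub_nonneg.2 hsp) (sq_nonneg ω)
    linear_combination hqr + middle_nonneg + sq_nonneg (ω ^ 2)
  exact moduli_lt.ne' moduli_eq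

end Quasipolynomial

/-- The diffusion rate `d k² π²` (with `d = 4`) of the `k`-th mode. The coefficients `p_k`, `r_k`
and `q_k` depend on `k` only through this number. -/
noncomputable def diffusionRate (k : ℕ) : ℝ := 4 * (k : ℝ) ^ 2 * Real.pi ^ 2

/-- The diffusion ratio at which a mode of diffusion rate `x > 0` has the root `λ = 0`,
that is, the solution `ε` of `r + q = 0`. -/
noncomputable def criticalRatio (x : ℝ) : ℝ := (x / 3 - 9) / (x ^ 2 + 9 * x)

theorem criticalRatio_pos {x : ℝ} (hx : 27 < x) : 0 < criticalRatio x :=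
  div_pos (by linarith) (by positivity)

theorem criticalRatio_lt_criticalRatio_iff {x y : ℝ} (hx : 0 < x) (hxy : x < y) :
    criticalRatio y < criticalRatio x ↔ 972 < (x - 27) * (y - 27) := by
  have hy : 0 < y := hx.trans hxy
  have cross_difference : (x / 3 - 9) * (y ^ 2 + 9 * y) - (y / 3 - 9) * (x ^ 2 + 9 * x) =
      (y - x) / 3 * ((x - 27) * (y - 27) - 972) := by
    ring
  rw [criticalRatio, criticalRatio, div_lt_div_iff₀ (by positivity) (by positivity), ← sub_pos,
    cross_difference, mul_pos_iff_of_pos_left (by linarith), sub_pos]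

section DiffusionRate

variable {k : ℕ}

theorem diffusionRate_one : diffusionRate 1 = 4 * Real.pi ^ 2 := by
  simp [diffusionRate]

theorem diffusionRate_eq_sq_mul (k : ℕ) :
    diffusionRate k = (k : ℝ) ^ 2 * diffusionRate 1 := by
  rw [diffusionRate_one, diffusionRate]
  ring

theorem thirtyNine_lt_diffusionRate_one : 39 < diffusionRate 1 := by
  rw [diffusionRate_one]
  nlinarith [Real.pi_gt_d2]

theorem thirtyNine_lt_diffusionRate (hk : k ≠ 0) : 39 < diffusionRate k := by
  have one_le_sq : (1 : ℝ) ≤ (k : ℝ) ^ 2 :=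
    one_le_pow₀ (by exact_mod_cast Nat.one_le_iff_ne_zero.2 hk)
  rw [diffusionRate_eq_sq_mul]
  nlinarith [thirtyNine_lt_diffusionRate_one]

theorem criticalRatio_diffusionRate_one : criticalRatio (diffusionRate 1) = epsStar := by
  rw [criticalRatio, diffusionRate_one, epsStar]
  ring

theorem criticalRatio_diffusionRate_lt_epsStar (hk : 2 ≤ k) :
    criticalRatio (diffusionRate k) < epsStar := by
  have four_le_sq : (4 : ℝ) ≤ (k : ℝ) ^ 2 := by exact_mod_cast Nat.pow_le_pow_left hk 2
  have four_mul_le : 4 * diffusionRate 1 ≤ diffusionRate k := by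
    rw [diffusionRate_eq_sq_mul k]
    nlinarith [thirtyNine_lt_diffusionRate_one]
  have rate_one := thirtyNine_lt_diffusionRate_one
  rw [← criticalRatio_diffusionRate_one,
    criticalRatio_lt_criticalRatio_iff (by linarith) (by linarith)]
  nlinarith

end DiffusionRate

section Coefficients

variable {ε : ℝ} {k : ℕ}

theorem pk_eq_diffusionRate (ε : ℝ) (k : ℕ) : pk ε k = (ε + 1) * diffusionRate k + 1 := by
  rw [pk, diffusionRate]
  ring

theorem rk_eq_diffusionRate (ε : ℝ) (k : ℕ) :
    rk ε k = ε * diffusionRate k ^ 2 + diffusionRate k := by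
  rw [rk, diffusionRate]
  ring

theorem qk_eq_diffusionRate (ε : ℝ) (k : ℕ) :
    qk ε k = (9 * ε - 4 / 3) * diffusionRate k + 9 := by
  rw [qk, diffusionRate]
  ring

theorem rk_add_qk_pos_iff (hk : k ≠ 0) :
    0 < rk ε k + qk ε k ↔ criticalRatio (diffusionRate k) < ε := by
  have rate_pos : 0 < diffusionRate k := by linarith [thirtyNine_lt_diffusionRate hk]
  rw [criticalRatio, div_lt_iff₀ (by positivity), rk_eq_diffusionRate, qk_eq_diffusionRate,
    ← sub_pos (b := diffusionRate k / 3 - 9)]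
  ring_nf

theorem rk_sub_qk_pos (hε : 0 ≤ ε) (hk : k ≠ 0) : 0 < rk ε k - qk ε k := by
  have hrate := thirtyNine_lt_diffusionRate hk
  have diffusive_nonneg : 0 ≤ ε * (diffusionRate k * (diffusionRate k - 9)) :=
    mul_nonneg hε (mul_nonneg (by linarith) (by linarith))
  rw [rk_eq_diffusionRate, qk_eq_diffusionRate]
  linarith

theorem sk_sq_add_two_mul_rk_lt_pk_sq (hε : 0 ≤ ε) (hk : k ≠ 0) :
    sk ^ 2 + 2 * rk ε k < pk ε k ^ 2 := by
  have hrate := thirtyNine_lt_diffusionRate hk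
  have ratio_mul_rate_nonneg : 0 ≤ ε * diffusionRate k := mul_nonneg hε (by linarith)
  rw [sk, rk_eq_diffusionRate, pk_eq_diffusionRate]
  calc (23 / 3) ^ 2 + 2 * (ε * diffusionRate k ^ 2 + diffusionRate k)
      < (ε * diffusionRate k) ^ 2 + diffusionRate k ^ 2 + 2 * (ε * diffusionRate k) + 1
          + 2 * (ε * diffusionRate k ^ 2 + diffusionRate k) := by nlinarith
    _ = ((ε + 1) * diffusionRate k + 1) ^ 2 := by ring

end Coefficients

theorem higher_modes_no_imaginary_roots_general {ε : ℝ} {k : ℕ} (hk : k ≠ 0)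
    (hrq : 0 < rk ε k + qk ε k) (τ ω : ℝ) :
    Dk ε τ k (Complex.I * (ω : ℂ)) ≠ 0 := by
  have critical_pos : 0 < criticalRatio (diffusionRate k) :=
    criticalRatio_pos (by linarith [thirtyNine_lt_diffusionRate hk])
  have hε : 0 ≤ ε := (critical_pos.trans ((rk_add_qk_pos_iff hk).1 hrq)).le
  have qk_sq_lt_rk_sq : qk ε k ^ 2 < rk ε k ^ 2 := by
    rw [← sub_pos, sq_sub_sq]
    exact mul_pos hrq (rk_sub_qk_pos hε hk)
  exact delayed_quadratic_I_mul_ne_zero qk_sq_lt_rk_sq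
    (sk_sq_add_two_mul_rk_lt_pk_sq hε hk).le τ ω

/-- For every `ε ≥ ε*`, every integer `k ≥ 2`, every `τ ≥ 0` and every real `ω`,
`D_k(iω; τ, ε) ≠ 0`; i.e., no characteristic function of a mode `k ≥ 2` ever has a
purely imaginary (or zero) root when `ε ≥ ε*`. -/
theorem higher_modes_no_imaginary_roots (ε : ℝ) (hε : epsStar ≤ ε) (k : ℕ) (hk : 2 ≤ k)
    (τ : ℝ) (hτ : 0 ≤ τ) (ω : ℝ) :
    Dk ε τ k (Complex.I * (ω : ℂ)) ≠ 0 := by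
  have hk' : k ≠ 0 := by lia
  have hrq : 0 < rk ε k + qk ε k :=
    (rk_add_qk_pos_iff hk').2 ((criticalRatio_diffusionRate_lt_epsStar hk).trans_le hε)
  exact higher_modes_no_imaginary_roots_general hk' hrq τ ω
end

section
/- At τ = τ* and ε = ε*: D_1(0; τ*, ε*) = 0, D_0(iω*; τ*) = D_0(−iω*; τ*) = 0, and these are the only characteristic roots in the closed right half plane; i.e., for every k ∈ ℕ₀ and every λ ∈ ℂ with Re λ ≥ 0 and D_k(λ; τ*, ε*) = 0, either k = 1 and λ = 0, or k = 0 and λ = iω* or λ = −iω*. Moreover the root 0 of D_1 and the roots ±iω* of D_0 are simple. -/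
/-!
Write each `D_k` as `z² + p z + r + (s z + q) e^{-zτ}` and let `z` be a root with `Re z ≥ 0`.

For `k ≥ 1`, `|z² + p z + r|² - |s z + q|²` is a sum of nonnegative terms, while `|e^{-zτ}| ≤ 1`
makes it nonpositive; hence `z = 0`, so that `r_k + q_k = 0`, and `ε*` is chosen so that `k = 1` is
the only such mode.

For `k = 0`, let `iω` be the given root. Its sine equation puts `ωτ` in `(0, π)` and bounds
`τ` from below by means of `sin (ωτ) ≤ ωτ`. With this bound, comparing moduli gives `|z| ≤ ω`.
By conjugation take `Im z ≥ 0`; then `tan (τ Im z) ≤ (Im z / ω) tan (τω)` turns into a polynomial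
inequality between the phases of the two roots which, under `Im z ≤ ω`, forces `Re z = 0` and
`Im z = ω`.
-/

/-- A division-free form of `tan (t θ) ≤ t tan θ`. -/
lemma sin_mul_mul_cos_le {t θ : ℝ} (ht0 : 0 ≤ t) (ht1 : t ≤ 1) (hθ0 : 0 ≤ θ) (hθπ : θ ≤ Real.pi) :
    Real.sin (t * θ) * Real.cos θ ≤ t * Real.sin θ * Real.cos (t * θ) := by
  have hsin : 0 ≤ Real.sin θ := Real.sin_nonneg_of_nonneg_of_le_pi hθ0 hθπ
  have hconcave : (1 - t) * Real.sin θ ≤ Real.sin ((1 - t) * θ) := by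
    simpa using strictConcaveOn_sin_Icc.concaveOn.2 ⟨le_rfl, Real.pi_pos.le⟩ ⟨hθ0, hθπ⟩
      ht0 (sub_nonneg.2 ht1) (add_sub_cancel t 1)
  have hsub : Real.sin ((1 - t) * θ) =
      Real.sin θ * Real.cos (t * θ) - Real.cos θ * Real.sin (t * θ) := by
    rw [← Real.sin_sub]
    ring_nf
  have hcos : (1 - t) * Real.sin θ * Real.cos (t * θ) ≤ (1 - t) * Real.sin θ :=
    mul_le_of_le_one_right (mul_nonneg (sub_nonneg.2 ht1) hsin) (Real.cos_le_one _)
  linarith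

lemma lt_pi_of_sin_pos {θ : ℝ} (hθ : θ < 2 * Real.pi) (hsin : 0 < Real.sin θ) : θ < Real.pi := by
  by_contra! hπ
  have := Real.sin_nonneg_of_nonneg_of_le_pi (x := θ - Real.pi) (by linarith) (by linarith)
  rw [Real.sin_sub_pi] at this
  linarith

/-- The characteristic function `z² + p z + r + (s z + q) e^{-zτ}` of a scalar second-order linear
delay equation with a single delay `τ`; both `Dk` and `D0` are instances. -/
noncomputable def delayChar (p r s q τ : ℝ) (z : ℂ) : ℂ :=
  z ^ 2 + p * z + r + (s * z + q) * Complex.exp (-z * τ)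

section DelayChar

variable {p r s q τ ω : ℝ} {z : ℂ}

lemma delayChar_zero : delayChar p r s q τ 0 = ((r + q : ℝ) : ℂ) := by
  simp [delayChar]

lemma delayChar_conj :
    delayChar p r s q τ (starRingEnd ℂ z) = starRingEnd ℂ (delayChar p r s q τ z) := by
  simp only [delayChar, map_add, map_mul, map_pow, map_neg, ← Complex.exp_conj,
    Complex.conj_ofReal]

lemma delayChar_conj_eq_zero (hz : delayChar p r s q τ z = 0) :
    delayChar p r s q τ (starRingEnd ℂ z) = 0 := by
  rw [delayChar_conj, hz, map_zero]

lemma hasDerivAt_delayChar (p r s q τ : ℝ) (z : ℂ) :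
    HasDerivAt (delayChar p r s q τ)
      (2 * z + p + (s - τ * (s * z + q)) * Complex.exp (-z * τ)) z := by
  have hquad : HasDerivAt (fun z : ℂ ↦ z ^ 2 + p * z + r) (2 * z + p) z := by
    simpa using ((hasDerivAt_pow 2 z).add ((hasDerivAt_id z).const_mul (p : ℂ))).add_const (r : ℂ)
  have hlin : HasDerivAt (fun z : ℂ ↦ s * z + q) s z := by
    simpa using ((hasDerivAt_id z).const_mul (s : ℂ)).add_const (q : ℂ)
  have hexp : HasDerivAt (fun z : ℂ ↦ Complex.exp (-z * τ)) (Complex.exp (-z * τ) * -τ) z := by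
    simpa using ((hasDerivAt_id z).neg.mul_const (τ : ℂ)).cexp
  exact (hquad.add (hlin.mul hexp)).congr_deriv (by ring)

lemma quadratic_eq_of_delayChar_eq_zero (hz : delayChar p r s q τ z = 0) :
    z ^ 2 + p * z + r = -((s * z + q) * Complex.exp (-z * τ)) :=
  eq_neg_of_add_eq_zero_left hz

lemma normSq_quadratic_of_delayChar_eq_zero (hz : delayChar p r s q τ z = 0) :
    Complex.normSq (z ^ 2 + p * z + r) =
      Complex.normSq (s * z + q) * Real.exp (-(2 * z.re * τ)) := by
  have hexp : (-z * τ).re = -(z.re * τ) := by simp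
  rw [quadratic_eq_of_delayChar_eq_zero hz, Complex.normSq_neg, Complex.normSq_mul,
    Complex.normSq_eq_norm_sq (Complex.exp _), Complex.norm_exp, hexp, ← Real.exp_nat_mul]
  push_cast
  ring_nf

lemma normSq_quadratic_mul_le_of_delayChar_eq_zero (hz : delayChar p r s q τ z = 0) :
    Complex.normSq (z ^ 2 + p * z + r) * (1 + 2 * z.re * τ) ≤ Complex.normSq (s * z + q) := by
  have hexp : 1 + 2 * z.re * τ ≤ Real.exp (2 * z.re * τ) := by
    linarith [Real.add_one_le_exp (2 * z.re * τ)]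
  calc Complex.normSq (z ^ 2 + p * z + r) * (1 + 2 * z.re * τ)
      ≤ Complex.normSq (z ^ 2 + p * z + r) * Real.exp (2 * z.re * τ) :=
        mul_le_mul_of_nonneg_left hexp (Complex.normSq_nonneg _)
    _ = Complex.normSq (s * z + q) := by
        rw [normSq_quadratic_of_delayChar_eq_zero hz, mul_assoc, ← Real.exp_add,
          neg_add_cancel, Real.exp_zero, mul_one]

lemma normSq_linear (s q : ℝ) (z : ℂ) :
    Complex.normSq (s * z + q) = s ^ 2 * Complex.normSq z + 2 * s * q * z.re + q ^ 2 := by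
  simp only [Complex.normSq_apply, Complex.add_re, Complex.mul_re, Complex.ofReal_re,
    Complex.ofReal_im, zero_mul, sub_zero, Complex.add_im, Complex.mul_im, add_zero]
  ring

lemma normSq_quadratic (p r : ℝ) (z : ℂ) :
    Complex.normSq (z ^ 2 + p * z + r) =
      Complex.normSq z ^ 2 + (p ^ 2 - 2 * r) * Complex.normSq z + r ^ 2 +
        2 * z.re * (p * Complex.normSq z + 2 * r * z.re + p * r) := by
  simp only [pow_two, Complex.normSq_apply, Complex.add_re, Complex.mul_re, Complex.ofReal_re,
    Complex.ofReal_im, zero_mul, sub_zero, Complex.add_im, Complex.mul_im, add_zero]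
  ring

lemma modulus_eq_of_delayChar_I_mul_eq_zero (hroot : delayChar p r s q τ (Complex.I * ω) = 0) :
    (ω ^ 2) ^ 2 + (p ^ 2 - 2 * r) * ω ^ 2 + r ^ 2 = s ^ 2 * ω ^ 2 + q ^ 2 := by
  have hmod := normSq_quadratic_of_delayChar_eq_zero hroot
  rw [normSq_quadratic, normSq_linear] at hmod
  simpa [← pow_two] using hmod

/-- Stability for all delays at once: on the closed right half plane `|z² + p z + r|` dominates
`|s z + q|`, with equality only at the origin. -/
theorem eq_zero_of_delayChar_eq_zero (hp : 0 ≤ p) (hqr : |q| ≤ r) (hps : s ^ 2 + 2 * r ≤ p ^ 2)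
    (hτ : 0 ≤ τ) (hre : 0 ≤ z.re) (hz : delayChar p r s q τ z = 0) : z = 0 := by
  have hr : 0 ≤ r := (abs_nonneg q).trans hqr
  have hsq : s * q ≤ p * r := by
    have hs : |s| ≤ p := abs_le_of_sq_le_sq (by linarith) hp
    calc s * q ≤ |s| * |q| := by rw [← abs_mul]; exact le_abs_self _
      _ ≤ p * r := by gcongr
  have hdom : Complex.normSq (z ^ 2 + p * z + r) ≤ Complex.normSq (s * z + q) :=
    (le_mul_of_one_le_right (Complex.normSq_nonneg _) (by linarith [mul_nonneg hre hτ])).trans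
      (normSq_quadratic_mul_le_of_delayChar_eq_zero hz)
  rw [normSq_quadratic, normSq_linear] at hdom
  have hm : 0 ≤ Complex.normSq z := Complex.normSq_nonneg z
  have hcoeff : 0 ≤ (p ^ 2 - 2 * r - s ^ 2) * Complex.normSq z := mul_nonneg (by linarith) hm
  have hconst : q ^ 2 ≤ r ^ 2 := sq_le_sq.2 (hqr.trans (le_abs_self r))
  have hlin : 0 ≤ z.re * (p * Complex.normSq z + 2 * r * z.re + (p * r - s * q)) := by
    have := sub_nonneg.2 hsq
    positivity
  have hm2 : Complex.normSq z ^ 2 ≤ 0 := by linarith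
  exact Complex.normSq_eq_zero.1 (pow_eq_zero_iff two_ne_zero |>.1 (hm2.antisymm (sq_nonneg _)))

/-- The point of the hypothesis `s q ≤ τ (s² ω² + q²)`: it lets `e^{2 τ Re z} ≥ 1 + 2 τ Re z`
absorb the only term of the modulus equation with the wrong sign. -/
theorem normSq_le_of_delayChar_eq_zero (hp : 0 ≤ p) (hr : 0 ≤ r) (hrq : r ^ 2 ≤ q ^ 2)
    (hτ : 0 ≤ τ) (hω : 0 < ω) (hroot : delayChar p r s q τ (Complex.I * ω) = 0)
    (hsq : s * q ≤ τ * (s ^ 2 * ω ^ 2 + q ^ 2)) (hre : 0 ≤ z.re)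
    (hz : delayChar p r s q τ z = 0) : Complex.normSq z ≤ ω ^ 2 := by
  have hωmod := modulus_eq_of_delayChar_I_mul_eq_zero hroot
  have hmod := normSq_quadratic_mul_le_of_delayChar_eq_zero hz
  have hN := normSq_quadratic p r z
  rw [normSq_linear] at hmod
  set m := Complex.normSq z
  set N := Complex.normSq (z ^ 2 + p * z + r)
  by_contra! hm
  have hm0 : 0 < m := (by positivity : 0 ≤ ω ^ 2).trans_lt hm
  -- `ω²` is a root of the quadratic `x² + (p² - 2r - s²) x + r² - q²`, whose other root is `≤ 0`.
  have hother : 0 ≤ ω ^ 2 + p ^ 2 - 2 * r - s ^ 2 :=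
    nonneg_of_mul_nonneg_right (by linarith) (pow_pos hω 2)
  have hP : 0 < m ^ 2 + (p ^ 2 - 2 * r - s ^ 2) * m + r ^ 2 - q ^ 2 := by
    linarith [mul_pos (sub_pos.2 hm) (by linarith : 0 < m + (ω ^ 2 + p ^ 2 - 2 * r - s ^ 2))]
  have hlin : 0 ≤ 2 * z.re * (p * m + 2 * r * z.re + p * r) := by positivity
  have hNω : s ^ 2 * ω ^ 2 + q ^ 2 ≤ N := by
    linarith [mul_le_mul_of_nonneg_left hm.le (sq_nonneg s)]
  have habsorb : 0 ≤ 2 * z.re * (τ * N - s * q) :=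
    mul_nonneg (by positivity) (sub_nonneg.2 (hsq.trans (mul_le_mul_of_nonneg_left hNω hτ)))
  linarith

lemma quadratic_mul_conj_linear_of_delayChar_eq_zero (hz : delayChar p r s q τ z = 0) :
    (z ^ 2 + p * z + r) * starRingEnd ℂ (s * z + q) =
      -(Complex.normSq (s * z + q) * Complex.exp (-z * τ)) := by
  rw [quadratic_eq_of_delayChar_eq_zero hz, Complex.normSq_eq_conj_mul_self]
  ring

lemma cos_eq_of_delayChar_eq_zero (hz : delayChar p r s q τ z = 0) :
    Complex.normSq (s * z + q) * Real.exp (-(z.re * τ)) * Real.cos (z.im * τ) =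
      (q - s * p) * z.im ^ 2 - r * q -
        z.re * ((q + s * p) * z.re + s * Complex.normSq z + r * s + p * q) := by
  have hre := congrArg Complex.re (quadratic_mul_conj_linear_of_delayChar_eq_zero hz)
  rw [Complex.neg_re, Complex.re_ofReal_mul, Complex.exp_re] at hre
  simp only [pow_two, map_add, map_mul, Complex.conj_ofReal, Complex.mul_re, Complex.add_re,
    Complex.ofReal_re, Complex.ofReal_im, zero_mul, sub_zero, Complex.conj_re, Complex.conj_im,
    mul_neg, neg_zero, Complex.add_im, Complex.mul_im, add_zero, sub_neg_eq_add, neg_mul,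
    Complex.neg_re, mul_zero, Complex.neg_im, zero_add, Real.cos_neg] at hre
  rw [Complex.normSq_apply z]
  linear_combination hre

lemma sin_eq_of_delayChar_eq_zero (hz : delayChar p r s q τ z = 0) :
    Complex.normSq (s * z + q) * Real.exp (-(z.re * τ)) * Real.sin (z.im * τ) =
      z.im * (s * Complex.normSq z + 2 * q * z.re + p * q - r * s) := by
  have him := congrArg Complex.im (quadratic_mul_conj_linear_of_delayChar_eq_zero hz)
  rw [Complex.neg_im, Complex.im_ofReal_mul, Complex.exp_im] at him
  simp only [pow_two, map_add, map_mul, Complex.conj_ofReal, Complex.mul_im, Complex.add_re,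
    Complex.mul_re, Complex.ofReal_re, Complex.ofReal_im, zero_mul, sub_zero, Complex.add_im,
    Complex.conj_im, mul_neg, Complex.conj_re, add_zero, neg_zero, neg_mul, Complex.neg_re,
    mul_zero, Complex.neg_im, zero_add, Real.sin_neg, neg_neg] at him
  rw [Complex.normSq_apply z]
  linear_combination -him

lemma cos_eq_of_delayChar_I_mul_eq_zero (hroot : delayChar p r s q τ (Complex.I * ω) = 0) :
    (s ^ 2 * ω ^ 2 + q ^ 2) * Real.cos (ω * τ) = (q - s * p) * ω ^ 2 - r * q := by
  simpa [normSq_linear, ← pow_two] using cos_eq_of_delayChar_eq_zero hroot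

lemma sin_eq_of_delayChar_I_mul_eq_zero (hroot : delayChar p r s q τ (Complex.I * ω) = 0) :
    (s ^ 2 * ω ^ 2 + q ^ 2) * Real.sin (ω * τ) = ω * (s * ω ^ 2 + p * q - r * s) := by
  simpa [normSq_linear, ← pow_two] using sin_eq_of_delayChar_eq_zero hroot

lemma delayChar_ofReal_ne_zero (hp : 0 ≤ p) (hr : 0 ≤ r) (hs : 0 ≤ s) (hq : 0 < q) {x : ℝ}
    (hx : 0 ≤ x) : delayChar p r s q τ x ≠ 0 := by
  have hreal : delayChar p r s q τ x =
      ((x ^ 2 + p * x + r + (s * x + q) * Real.exp (-x * τ) : ℝ) : ℂ) := by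
    simp [delayChar]
  rw [hreal, Complex.ofReal_ne_zero]
  positivity

/-- This is `tan (τ Im z) ≤ (Im z / ω) tan (τ ω)`, with sines and cosines eliminated by the
characteristic equations of `z` and `iω`. -/
lemma phase_le_of_delayChar_eq_zero (hω : 0 < ω) (hωτ : ω * τ ∈ Set.Icc 0 Real.pi)
    (hroot : delayChar p r s q τ (Complex.I * ω) = 0) (him : 0 < z.im) (himω : z.im ≤ ω)
    (hz : delayChar p r s q τ z = 0) :
    (s * Complex.normSq z + 2 * q * z.re + p * q - r * s) * ((q - s * p) * ω ^ 2 - r * q) ≤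
      (s * ω ^ 2 + p * q - r * s) * ((q - s * p) * z.im ^ 2 - r * q -
        z.re * ((q + s * p) * z.re + s * Complex.normSq z + r * s + p * q)) := by
  have htan := sin_mul_mul_cos_le (t := z.im / ω) (by positivity) ((div_le_one hω).2 himω)
    hωτ.1 hωτ.2
  rw [show z.im / ω * (ω * τ) = z.im * τ by field_simp] at htan
  set R := Complex.normSq (s * z + q) * Real.exp (-(z.re * τ))
  have hR0 : 0 ≤ R := mul_nonneg (Complex.normSq_nonneg _) (Real.exp_pos _).le
  have hscaled := mul_le_mul_of_nonneg_left htan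
    (mul_nonneg hR0 (by positivity : 0 ≤ s ^ 2 * ω ^ 2 + q ^ 2))
  refine le_of_mul_le_mul_left ?_ him
  calc _ = R * Real.sin (z.im * τ) * ((s ^ 2 * ω ^ 2 + q ^ 2) * Real.cos (ω * τ)) := by
        rw [sin_eq_of_delayChar_eq_zero hz, cos_eq_of_delayChar_I_mul_eq_zero hroot]
        ring
    _ ≤ z.im / ω * ((s ^ 2 * ω ^ 2 + q ^ 2) * Real.sin (ω * τ)) * (R * Real.cos (z.im * τ)) := by
        linarith
    _ = _ := by
        rw [cos_eq_of_delayChar_eq_zero hz, sin_eq_of_delayChar_I_mul_eq_zero hroot]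
        field_simp

lemma eq_I_mul_of_im_le (hp : 0 < p) (hr : 0 ≤ r) (hs : 0 ≤ s) (hq : 0 < q) (hω : 0 < ω)
    (hcos : r * q < (q - s * p) * ω ^ 2) (hsin : 0 < s * ω ^ 2 + p * q - r * s)
    (hωτ : ω * τ ∈ Set.Icc 0 Real.pi) (hroot : delayChar p r s q τ (Complex.I * ω) = 0)
    (hre : 0 ≤ z.re) (him : 0 < z.im) (himω : z.im ≤ ω) (hz : delayChar p r s q τ z = 0) :
    z = Complex.I * ω := by
  have hphase := phase_le_of_delayChar_eq_zero hω hωτ hroot him himω hz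
  have hm : Complex.normSq z = z.re ^ 2 + z.im ^ 2 := by rw [Complex.normSq_apply]; ring
  have hA : 0 < (q - s * p) * ω ^ 2 - r * q := sub_pos.2 hcos
  have hspq : 0 < q - s * p :=
    pos_of_mul_pos_left ((mul_nonneg hr hq.le).trans_lt hcos) (sq_nonneg ω)
  have hgap : 0 ≤ ω ^ 2 - z.im ^ 2 := sub_nonneg.2 (pow_le_pow_left₀ him.le himω 2)
  have hcoeff : 0 < p * (q * (q - s * p) + r * s ^ 2) := by positivity
  have hsplit : p * (q * (q - s * p) + r * s ^ 2) * (ω ^ 2 - z.im ^ 2) +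
      z.re * (2 * q * ((q - s * p) * ω ^ 2 - r * q)) +
      z.re * (s * z.re * ((q - s * p) * ω ^ 2 - r * q) + (s * ω ^ 2 + p * q - r * s) *
        ((q + s * p) * z.re + s * Complex.normSq z + r * s + p * q)) ≤ 0 := by
    rw [hm] at hphase ⊢
    linarith
  have hrest : 0 ≤ z.re * (s * z.re * ((q - s * p) * ω ^ 2 - r * q) +
      (s * ω ^ 2 + p * q - r * s) *
        ((q + s * p) * z.re + s * Complex.normSq z + r * s + p * q)) := by
    have := Complex.normSq_nonneg z
    positivity
  have hre0 : z.re = 0 := by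
    have : z.re * (2 * q * ((q - s * p) * ω ^ 2 - r * q)) ≤ 0 := by
      linarith [mul_nonneg hcoeff.le hgap]
    exact hre.antisymm' (nonpos_of_mul_nonpos_left this (by positivity))
  have hsq : ω ^ 2 - z.im ^ 2 ≤ 0 := by
    rw [hre0] at hsplit
    exact nonpos_of_mul_nonpos_right (by linarith) hcoeff
  have him_eq : z.im = ω :=
    himω.antisymm ((sq_le_sq₀ hω.le him.le).1 (sub_nonpos.1 hsq))
  apply Complex.ext <;> simp [hre0, him_eq]

lemma mul_lt_pi_of_delayChar_I_mul_eq_zero (hq : q ≠ 0) (hω : 0 < ω)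
    (hsin : 0 < s * ω ^ 2 + p * q - r * s) (hωτ : ω * τ < 2 * Real.pi)
    (hroot : delayChar p r s q τ (Complex.I * ω) = 0) : ω * τ < Real.pi := by
  have hR : 0 < s ^ 2 * ω ^ 2 + q ^ 2 := by positivity
  refine lt_pi_of_sin_pos hωτ ?_
  rw [← mul_pos_iff_of_pos_left hR, sin_eq_of_delayChar_I_mul_eq_zero hroot]
  positivity

/-- This is `sin (ωτ) ≤ ωτ`; it bounds the delay from below. -/
lemma le_delay_mul_of_delayChar_I_mul_eq_zero (hτ : 0 ≤ τ) (hω : 0 < ω)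
    (hroot : delayChar p r s q τ (Complex.I * ω) = 0) :
    s * ω ^ 2 + p * q - r * s ≤ τ * (s ^ 2 * ω ^ 2 + q ^ 2) := by
  refine le_of_mul_le_mul_left ?_ hω
  calc ω * (s * ω ^ 2 + p * q - r * s) = (s ^ 2 * ω ^ 2 + q ^ 2) * Real.sin (ω * τ) :=
        (sin_eq_of_delayChar_I_mul_eq_zero hroot).symm
    _ ≤ (s ^ 2 * ω ^ 2 + q ^ 2) * (ω * τ) := by
        gcongr
        exact Real.sin_le (by positivity)
    _ = ω * (τ * (s ^ 2 * ω ^ 2 + q ^ 2)) := by ring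

theorem eq_I_mul_or_eq_neg_of_delayChar_eq_zero (hp : 0 < p) (hr : 0 ≤ r) (hs : 0 < s)
    (hrq : r ≤ q) (hq : 0 < q) (hω : 0 < ω) (hcos : r * q < (q - s * p) * ω ^ 2)
    (hqω : q + r ≤ ω ^ 2) (hωτ : ω * τ ∈ Set.Ioo 0 (2 * Real.pi))
    (hroot : delayChar p r s q τ (Complex.I * ω) = 0) (hre : 0 ≤ z.re)
    (hz : delayChar p r s q τ z = 0) : z = Complex.I * ω ∨ z = -(Complex.I * ω) := by
  have hτ : 0 < τ := pos_of_mul_pos_right hωτ.1 hω.le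
  have hsq : s * q ≤ s * ω ^ 2 + p * q - r * s := by
    linarith [mul_le_mul_of_nonneg_left hqω hs.le, mul_pos hp hq]
  have hsin : 0 < s * ω ^ 2 + p * q - r * s := (mul_pos hs hq).trans_le hsq
  have hhalf : ω * τ ∈ Set.Icc 0 Real.pi :=
    ⟨hωτ.1.le, (mul_lt_pi_of_delayChar_I_mul_eq_zero hq.ne' hω hsin hωτ.2 hroot).le⟩
  have hdelay := hsq.trans (le_delay_mul_of_delayChar_I_mul_eq_zero hτ.le hω hroot)
  have hnorm : Complex.normSq z ≤ ω ^ 2 :=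
    normSq_le_of_delayChar_eq_zero hp.le hr (pow_le_pow_left₀ hr hrq 2) hτ.le hω hroot hdelay
      hre hz
  have him : |z.im| ≤ ω := by
    refine abs_le_of_sq_le_sq ?_ hω.le
    rw [Complex.normSq_apply] at hnorm
    linarith [mul_self_nonneg z.re]
  rcases lt_trichotomy z.im 0 with hneg | hzero | hpos
  · right
    have hconj := eq_I_mul_of_im_le (z := starRingEnd ℂ z) hp hr hs.le hq hω hcos hsin hhalf
      hroot (by simpa using hre) (by simpa using hneg)
      (by simpa using neg_le.1 (neg_le_of_abs_le him)) (delayChar_conj_eq_zero hz)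
    simpa using congrArg (starRingEnd ℂ) hconj
  · refine absurd hz ?_
    rw [show z = (z.re : ℂ) from Complex.ext rfl hzero]
    exact delayChar_ofReal_ne_zero hp.le hr hs.le hq hre
  · exact Or.inl (eq_I_mul_of_im_le hp hr hs.le hq hω hcos hsin hhalf hroot hre hpos
      (le_of_abs_le him) hz)

/-- At a root, `(s z + q) D'(z)` is a polynomial in `z`; its real part at `z = iω` is negative. -/
theorem exists_hasDerivAt_delayChar_I_mul (hτ : 0 ≤ τ) (hpq : p * q < s * (ω ^ 2 + r))
    (hqr : q * r ≤ (s * p + q) * ω ^ 2) (hroot : delayChar p r s q τ (Complex.I * ω) = 0) :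
    ∃ c : ℂ, c ≠ 0 ∧ HasDerivAt (delayChar p r s q τ) c (Complex.I * ω) := by
  refine ⟨_, fun hderiv ↦ ?_, hasDerivAt_delayChar p r s q τ _⟩
  generalize hz : Complex.I * (ω : ℂ) = z at hderiv hroot
  have hpoly : s * z ^ 2 + 2 * q * z + p * q - r * s +
      τ * ((s * z + q) * (z ^ 2 + p * z + r)) = 0 := by
    unfold delayChar at hroot
    linear_combination (s * z + q) * hderiv - (s - τ * (s * z + q)) * hroot
  have hre := congrArg Complex.re hpoly
  rw [← hz] at hre
  simp only [pow_two, Complex.add_re, Complex.sub_re, Complex.mul_re, Complex.ofReal_re,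
    Complex.I_re, zero_mul, Complex.I_im, Complex.ofReal_im, mul_zero, sub_self, Complex.mul_im,
    one_mul, zero_add, zero_sub, mul_neg, add_zero, sub_zero, Complex.re_ofNat, Complex.im_ofNat,
    Complex.add_im, Complex.zero_re] at hre
  linarith [mul_nonneg hτ (sub_nonneg.2 hqr)]

theorem exists_hasDerivAt_delayChar_zero (hτ : 0 ≤ τ) (hps : 0 < p + s) (hq : q ≤ 0) :
    ∃ c : ℂ, c ≠ 0 ∧ HasDerivAt (delayChar p r s q τ) c 0 := by
  refine ⟨((p + s - τ * q : ℝ) : ℂ), ?_, ?_⟩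
  · rw [Complex.ofReal_ne_zero]
    exact ne_of_gt (by linarith [mul_nonpos_of_nonneg_of_nonpos hτ hq])
  · refine (hasDerivAt_delayChar p r s q τ 0).congr_deriv ?_
    simp only [mul_zero, zero_add, neg_zero, zero_mul, Complex.exp_zero, mul_one,
      Complex.ofReal_sub, Complex.ofReal_add, Complex.ofReal_mul]
    ring

end DelayChar

section Modes

variable {ε τ : ℝ} {k : ℕ} {z : ℂ}

/-- The eigenvalue `d k² π²`, `d = 4`, through which the `k`-th mode enters `pk`, `rk`, `qk`. -/
noncomputable def modeEigenvalue (k : ℕ) : ℝ := 4 * (k : ℝ) ^ 2 * Real.pi ^ 2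

lemma pk_eq (ε : ℝ) (k : ℕ) : pk ε k = (ε + 1) * modeEigenvalue k + 1 := by
  rw [pk, modeEigenvalue]; ring

lemma rk_eq (ε : ℝ) (k : ℕ) : rk ε k = ε * modeEigenvalue k ^ 2 + modeEigenvalue k := by
  rw [rk, modeEigenvalue]; ring

lemma qk_eq (ε : ℝ) (k : ℕ) : qk ε k = (9 * ε - 4 / 3) * modeEigenvalue k + 9 := by
  rw [qk, modeEigenvalue]; ring

lemma lt_modeEigenvalue (hk : 1 ≤ k) : 39 < modeEigenvalue k := by
  have hk2 : (1 : ℝ) ≤ (k : ℝ) ^ 2 := one_le_pow₀ (by exact_mod_cast hk)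
  calc (39 : ℝ) < 4 * 1 * 3.14 ^ 2 := by norm_num
    _ ≤ 4 * (k : ℝ) ^ 2 * Real.pi ^ 2 := by gcongr; exact Real.pi_gt_d2.le

lemma four_mul_modeEigenvalue_one_le (hk : 2 ≤ k) :
    4 * modeEigenvalue 1 ≤ modeEigenvalue k := by
  have hk2 : (2 : ℝ) ^ 2 ≤ (k : ℝ) ^ 2 := by gcongr; exact_mod_cast hk
  rw [modeEigenvalue, modeEigenvalue, Nat.cast_one]
  linarith [mul_le_mul_of_nonneg_right hk2 (sq_nonneg Real.pi)]

lemma Dk_eq_delayChar (ε τ : ℝ) (k : ℕ) :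
    Dk ε τ k = delayChar (pk ε k) (rk ε k) sk (qk ε k) τ :=
  rfl

lemma D0_eq_delayChar (τ : ℝ) : D0 τ = delayChar 1 0 (23 / 3) 9 τ := by
  ext z
  simp [D0, delayChar]

lemma Dk_zero (ε τ : ℝ) : Dk ε τ 0 = D0 τ := by
  ext z
  simp [D0, Dk, pk, rk, qk, sk]

lemma epsStar_mul : epsStar * modeEigenvalue 1 * (modeEigenvalue 1 + 9) =
    modeEigenvalue 1 / 3 - 9 := by
  simp only [epsStar, modeEigenvalue, Nat.cast_one]
  have := Real.pi_pos
  field_simp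
  ring

lemma epsStar_pos : 0 < epsStar := by
  have := lt_modeEigenvalue (k := 1) le_rfl
  have hpos : 0 < epsStar * (modeEigenvalue 1 * (modeEigenvalue 1 + 9)) := by
    linarith [epsStar_mul]
  exact pos_of_mul_pos_left hpos (by positivity)

/-- As a quadratic polynomial in the eigenvalue `x` of the mode, `r_k + q_k` vanishes at `x = x₁`
by the choice of `ε*`; the other root is `9 / (ε* x₁)`. -/
lemma modeEigenvalue_one_mul_rk_add_qk (k : ℕ) :
    modeEigenvalue 1 * (rk epsStar k + qk epsStar k) =
      (modeEigenvalue k - modeEigenvalue 1) *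
        (epsStar * modeEigenvalue k * modeEigenvalue 1 - 9) := by
  rw [rk_eq, qk_eq]
  linear_combination modeEigenvalue k * epsStar_mul

lemma rk_add_qk_one : rk epsStar 1 + qk epsStar 1 = 0 := by
  have hprod := modeEigenvalue_one_mul_rk_add_qk 1
  rw [sub_self, zero_mul] at hprod
  have hpos : 0 < modeEigenvalue 1 := by linarith [lt_modeEigenvalue (k := 1) le_rfl]
  exact (mul_eq_zero.1 hprod).resolve_left hpos.ne'

lemma rk_add_qk_pos (hk : 2 ≤ k) : 0 < rk epsStar k + qk epsStar k := by
  have hX := lt_modeEigenvalue (k := 1) le_rfl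
  have hε := epsStar_pos
  have hx := four_mul_modeEigenvalue_one_le hk
  have hroot : 9 < epsStar * (4 * modeEigenvalue 1) * modeEigenvalue 1 := by
    refine lt_of_mul_lt_mul_right ?_ (by linarith : 0 ≤ modeEigenvalue 1 + 9)
    calc 9 * (modeEigenvalue 1 + 9)
        < 4 * modeEigenvalue 1 * (modeEigenvalue 1 / 3 - 9) := by nlinarith
      _ = epsStar * (4 * modeEigenvalue 1) * modeEigenvalue 1 * (modeEigenvalue 1 + 9) := by
          rw [← epsStar_mul]; ring
  have hmono : epsStar * (4 * modeEigenvalue 1) * modeEigenvalue 1 ≤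
      epsStar * modeEigenvalue k * modeEigenvalue 1 := by gcongr
  refine pos_of_mul_pos_right (?_ : 0 < modeEigenvalue 1 * _) (by linarith)
  rw [modeEigenvalue_one_mul_rk_add_qk]
  exact mul_pos (by linarith) (by linarith)

lemma qk_le_rk (hε : 0 ≤ ε) (hk : 1 ≤ k) : qk ε k ≤ rk ε k := by
  have hx := lt_modeEigenvalue hk
  rw [qk_eq, rk_eq]
  have : 0 ≤ ε * modeEigenvalue k * (modeEigenvalue k - 9) :=
    mul_nonneg (by positivity) (by linarith)
  linarith

lemma sk_sq_add_two_mul_rk_le (hε : 0 ≤ ε) (hk : 1 ≤ k) :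
    sk ^ 2 + 2 * rk ε k ≤ pk ε k ^ 2 := by
  have hx := lt_modeEigenvalue hk
  have hεx : 0 ≤ ε * modeEigenvalue k := by positivity
  rw [pk_eq, rk_eq, sk]
  nlinarith [sq_nonneg (ε * modeEigenvalue k)]

lemma pk_pos (hε : 0 ≤ ε) (k : ℕ) : 0 < pk ε k := by
  unfold pk
  positivity

theorem eq_one_and_eq_zero_of_Dk_eq_zero (hτ : 0 ≤ τ) (hk : 1 ≤ k) (hre : 0 ≤ z.re)
    (hz : Dk epsStar τ k z = 0) : k = 1 ∧ z = 0 := by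
  have hε := epsStar_pos.le
  have hsum : 0 ≤ rk epsStar k + qk epsStar k := by
    rcases hk.eq_or_lt with rfl | hk2
    · exact rk_add_qk_one.ge
    · exact (rk_add_qk_pos hk2).le
  rw [Dk_eq_delayChar] at hz
  have hz0 : z = 0 := eq_zero_of_delayChar_eq_zero (pk_pos hε k).le
    (abs_le.2 ⟨by linarith, qk_le_rk hε hk⟩) (sk_sq_add_two_mul_rk_le hε hk) hτ hre hz
  rw [hz0, delayChar_zero, Complex.ofReal_eq_zero] at hz
  refine ⟨hk.antisymm' (le_of_not_gt fun hk2 ↦ ?_), hz0⟩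
  exact (rk_add_qk_pos hk2).ne' hz

lemma exists_hasDerivAt_Dk_one (hτ : 0 ≤ τ) :
    ∃ c : ℂ, c ≠ 0 ∧ HasDerivAt (Dk epsStar τ 1) c 0 := by
  have hε := epsStar_pos.le
  rw [Dk_eq_delayChar]
  refine exists_hasDerivAt_delayChar_zero hτ (add_pos (pk_pos hε 1) (by norm_num [sk])) ?_
  linarith [rk_add_qk_one, qk_le_rk hε le_rfl]

lemma omegaStar_pos : 0 < omegaStar := Real.sqrt_pos.2 (by positivity)

lemma nine_le_omegaStar_sq : 9 ≤ omegaStar ^ 2 := by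
  rw [omegaStar, Real.sq_sqrt (by positivity)]
  linarith [Real.sqrt_nonneg 296644]

theorem eq_I_mul_omegaStar_or_eq_neg_of_D0_eq_zero
    (hτ : τ ∈ Set.Ioo 0 (2 * Real.pi / omegaStar)) (hroot : D0 τ (Complex.I * omegaStar) = 0)
    (hre : 0 ≤ z.re) (hz : D0 τ z = 0) :
    z = Complex.I * omegaStar ∨ z = -(Complex.I * omegaStar) := by
  have hω := omegaStar_pos
  have hω9 := nine_le_omegaStar_sq
  have hωτ : omegaStar * τ ∈ Set.Ioo 0 (2 * Real.pi) :=
    ⟨mul_pos hω hτ.1, by linarith [(lt_div_iff₀ hω).1 hτ.2]⟩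
  rw [D0_eq_delayChar] at hroot hz
  exact eq_I_mul_or_eq_neg_of_delayChar_eq_zero one_pos le_rfl (by norm_num) (by norm_num)
    (by norm_num) hω (by linarith) (by linarith) hωτ hroot hre hz

lemma exists_hasDerivAt_D0 {ω : ℝ} (hτ : 0 ≤ τ) (hω : 9 ≤ ω ^ 2)
    (hroot : D0 τ (Complex.I * ω) = 0) :
    ∃ c : ℂ, c ≠ 0 ∧ HasDerivAt (D0 τ) c (Complex.I * ω) := by
  rw [D0_eq_delayChar] at hroot ⊢
  exact exists_hasDerivAt_delayChar_I_mul hτ (by linarith) (by linarith) hroot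

lemma D0_I_mul_neg_eq_zero {ω : ℝ} (hroot : D0 τ (Complex.I * ω) = 0) :
    D0 τ (Complex.I * ((-ω : ℝ) : ℂ)) = 0 := by
  rw [D0_eq_delayChar] at hroot ⊢
  simpa using delayChar_conj_eq_zero hroot

end Modes

/-- At `τ = τ*` and `ε = ε*` (where `τ*` is the unique `τ ∈ (0, 2π/ω*)` with
`D_0(iω*; τ) = 0`): `D_1(0; τ*, ε*) = 0`, `D_0(±iω*; τ*) = 0`, these are the only
characteristic roots in the closed right half plane, and the root `0` of `D_1` and the
roots `±iω*` of `D_0` are simple. -/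
theorem turing_hopf_critical_spectrum (τs : ℝ)
    (hmem : τs ∈ Set.Ioo 0 (2 * Real.pi / omegaStar))
    (hτs : D0 τs (Complex.I * (omegaStar : ℂ)) = 0) :
    Dk epsStar τs 1 0 = 0 ∧
    D0 τs (Complex.I * (omegaStar : ℂ)) = 0 ∧
    D0 τs (-(Complex.I * (omegaStar : ℂ))) = 0 ∧
    (∀ k : ℕ, ∀ z : ℂ, 0 ≤ z.re → Dk epsStar τs k z = 0 →
      (k = 1 ∧ z = 0) ∨
      (k = 0 ∧ (z = Complex.I * (omegaStar : ℂ) ∨ z = -(Complex.I * (omegaStar : ℂ))))) ∧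
    (∃ c : ℂ, c ≠ 0 ∧ HasDerivAt (Dk epsStar τs 1) c 0) ∧
    (∃ c : ℂ, c ≠ 0 ∧ HasDerivAt (D0 τs) c (Complex.I * (omegaStar : ℂ))) ∧
    (∃ c : ℂ, c ≠ 0 ∧ HasDerivAt (D0 τs) c (-(Complex.I * (omegaStar : ℂ)))) := by
  have hneg : -(Complex.I * (omegaStar : ℂ)) = Complex.I * ((-omegaStar : ℝ) : ℂ) := by simp
  have hnegroot := D0_I_mul_neg_eq_zero hτs
  refine ⟨?_, hτs, hneg ▸ hnegroot, fun k z hre hz ↦ ?_, exists_hasDerivAt_Dk_one hmem.1.le,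
    exists_hasDerivAt_D0 hmem.1.le nine_le_omegaStar_sq hτs, ?_⟩
  · rw [Dk_eq_delayChar, delayChar_zero, rk_add_qk_one, Complex.ofReal_zero]
  · rcases Nat.eq_zero_or_pos k with rfl | hk
    · rw [Dk_zero] at hz
      exact Or.inr ⟨rfl, eq_I_mul_omegaStar_or_eq_neg_of_D0_eq_zero hmem hτs hre hz⟩
    · exact Or.inl (eq_one_and_eq_zero_of_Dk_eq_zero hmem.1.le hk hre hz)
  · rw [hneg]
    exact exists_hasDerivAt_D0 hmem.1.le (by simpa using nine_le_omegaStar_sq) hnegroot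
end
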